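/- Let b and σ_1, …, σ_{r̄} : ℝ^r → ℝ^r be C¹ vector fields and suppose Z : {(u,t) : 0 ≤ u ≤ t} × ℝ^r → ℝ^r is a flow for b, i.e. Z_{u,u}(x) = x, ∂_t Z_{u,t}(x) = b(Z_{u,t}(x)), and Z_{u,t}(Z_{s,u}(x)) = Z_{s,t}(x) for s ≤ u ≤ t; assume moreover that for each fixed t the map (u, x) ↦ Z_{u,t}(x) is twice continuously differentiable in x and C¹ in u, with all indicated derivatives continuous. Fix s ≤ t and x ∈ ℝ^r, let h : [s,t] → ℝ^{r̄} be C¹, and let Y : [s,t] → ℝ^r solve Y(s) = x and Y'(u) = b(Y(u)) + Σ_{j=1}^{r̄} σ_j(Y(u)) h_j'(u). Then for every C² function f : ℝ^r → ℝ, f(Y(t)) = f(Z_{s,t}(x)) + Σ_{j=1}^{r̄} ∫_s^t ∂_{σ_j}(f ∘ Z_{u,t})(Z_{s,u}(x)) h_j'(u) du + Σ_{i,j=1}^{r̄} ∫_s^t ( ∫_s^u ∂_{σ_i}( ∂_{σ_j}(f ∘ Z_{u,t}) ∘ Z_{v,u} )(Y(v)) h_i'(v) dv ) h_j'(u) du,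 where for a C¹ function φ : ℝ^r → ℝ and a vector field g, ∂_g φ(y) := ⟨∇φ(y), g(y)⟩. -/

import Mathlib

/-!
Compose the perturbed curve `Y` with the backward family `u ↦ Z u T`. Since `Z u T (Z s u x)` does
not depend on `u`, the drift `b` contributes nothing to the derivative of `Z u T (Y u)`, and only
the perturbation survives; integrating gives the first-order (Alekseev–Gröbner) formula. The
second-order formula results from applying the first-order one, on `[s, u]`, to the test functions
`∂_{σ_j} (f ∘ Z u t)` that occur in its own integrand.

The integrals may be split because all integrands are continuous. Here autonomy enters: it makes
`Z v u = Z (t - u + v) t`, so regularity of `Z · t` alone controls `Z v u` jointly in `(u, v)`.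
-/

open Set Function

variable {E F G : Type*} [NormedAddCommGroup E] [NormedSpace ℝ E]
  [NormedAddCommGroup F] [NormedSpace ℝ F] [NormedAddCommGroup G] [NormedSpace ℝ G]

/-- The directional derivative `∂_g φ` of `φ` along the vector field `g`. -/
noncomputable def dirDeriv (g : E → E) (φ : E → F) (y : E) : F :=
  fderiv ℝ φ y (g y)

/-- A family of `C¹` maps `A u`, `u ∈ S`, which is continuous together with its spatial derivative
jointly in the parameter and the point; nothing is differentiated in the parameter. -/
structure IsC1FamilyOn {X : Type*} [TopologicalSpace X] (S : Set X) (A : X → E → F) : Prop where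
  contDiff : ∀ u ∈ S, ContDiff ℝ 1 (A u)
  continuousOn : ContinuousOn (fun p : X × E => A p.1 p.2) (S ×ˢ univ)
  continuousOn_fderiv : ContinuousOn (fun p : X × E => fderiv ℝ (A p.1) p.2) (S ×ˢ univ)

namespace IsC1FamilyOn

section Calculus

variable {X X' : Type*} [TopologicalSpace X] [TopologicalSpace X'] {S : Set X} {S' : Set X'}
  {A B : X → E → F}

lemma differentiableAt (hA : IsC1FamilyOn S A) {u : X} (hu : u ∈ S) (y : E) :
    DifferentiableAt ℝ (A u) y :=
  (hA.contDiff u hu).differentiable one_ne_zero y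

lemma const {φ : E → F} (hφ : ContDiff ℝ 1 φ) : IsC1FamilyOn S fun _ => φ where
  contDiff _ _ := hφ
  continuousOn := (hφ.continuous.comp continuous_snd).continuousOn
  continuousOn_fderiv := ((hφ.continuous_fderiv one_ne_zero).comp continuous_snd).continuousOn

lemma congr (hA : IsC1FamilyOn S A) (hBA : ∀ u ∈ S, B u = A u) : IsC1FamilyOn S B where
  contDiff u hu := hBA u hu ▸ hA.contDiff u hu
  continuousOn := hA.continuousOn.congr fun p hp => by rw [hBA p.1 hp.1]
  continuousOn_fderiv := hA.continuousOn_fderiv.congr fun p hp => by rw [hBA p.1 hp.1]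

lemma comp_param (hA : IsC1FamilyOn S A) {a : X' → X} (ha : ContinuousOn a S')
    (haS : MapsTo a S' S) : IsC1FamilyOn S' fun v => A (a v) := by
  have hpair : ContinuousOn (fun p : X' × E => (a p.1, p.2)) (S' ×ˢ univ) :=
    (ha.comp continuousOn_fst fun _ hp => hp.1).prodMk continuousOn_snd
  have hmaps : MapsTo (fun p : X' × E => (a p.1, p.2)) (S' ×ˢ univ) (S ×ˢ univ) :=
    fun p hp => ⟨haS hp.1, mem_univ _⟩
  exact ⟨fun v hv => hA.contDiff _ (haS hv), hA.continuousOn.comp hpair hmaps,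
    hA.continuousOn_fderiv.comp hpair hmaps⟩

lemma comp {C : X → F → G} (hC : IsC1FamilyOn S C) (hA : IsC1FamilyOn S A) :
    IsC1FamilyOn S fun u => C u ∘ A u := by
  have hpair : ContinuousOn (fun p : X × E => (p.1, A p.1 p.2)) (S ×ˢ univ) :=
    continuousOn_fst.prodMk hA.continuousOn
  have hmaps : MapsTo (fun p : X × E => (p.1, A p.1 p.2)) (S ×ˢ univ) (S ×ˢ univ) :=
    fun p hp => ⟨hp.1, mem_univ _⟩
  refine ⟨fun u hu => (hC.contDiff u hu).comp (hA.contDiff u hu),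
    hC.continuousOn.comp hpair hmaps, ?_⟩
  refine ((hC.continuousOn_fderiv.comp hpair hmaps).clm_comp hA.continuousOn_fderiv).congr ?_
  exact fun p hp => fderiv_comp _ (hC.differentiableAt hp.1 _) (hA.differentiableAt hp.1 _)

lemma clm_apply {L : X → E → F →L[ℝ] G} (hL : IsC1FamilyOn S L) (hA : IsC1FamilyOn S A) :
    IsC1FamilyOn S fun u y => L u y (A u y) where
  contDiff u hu := (hL.contDiff u hu).clm_apply (hA.contDiff u hu)
  continuousOn := hL.continuousOn.clm_apply hA.continuousOn
  continuousOn_fderiv := by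
    have hflip : ContinuousOn (fun p : X × E => (fderiv ℝ (L p.1) p.2).flip) (S ×ˢ univ) :=
      (ContinuousLinearMap.flipₗᵢ ℝ E F G).continuous.comp_continuousOn hL.continuousOn_fderiv
    refine ((hL.continuousOn.clm_comp hA.continuousOn_fderiv).add
      (hflip.clm_apply hA.continuousOn)).congr ?_
    exact fun p hp => fderiv_clm_apply (hL.differentiableAt hp.1 _) (hA.differentiableAt hp.1 _)

lemma continuousOn_dirDeriv (hA : IsC1FamilyOn S A) {g : E → E} (hg : Continuous g) :
    ContinuousOn (fun p : X × E => dirDeriv g (A p.1) p.2) (S ×ˢ univ) :=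
  hA.continuousOn_fderiv.clm_apply (hg.comp continuous_snd).continuousOn

lemma dirDeriv_comp (hA : IsC1FamilyOn S A) (hA' : IsC1FamilyOn S fun u => fderiv ℝ (A u))
    {g : E → E} (hg : ContDiff ℝ 1 g) {f : F → G} (hf : ContDiff ℝ 2 f) :
    IsC1FamilyOn S fun u => dirDeriv g (f ∘ A u) := by
  have hf' : IsC1FamilyOn S fun u => fderiv ℝ f ∘ A u :=
    (const (hf.fderiv_right (by norm_num))).comp hA
  refine (hf'.clm_apply (hA'.clm_apply (const hg))).congr fun u hu => funext fun y => ?_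
  rw [dirDeriv, fderiv_comp _ (hf.differentiable two_ne_zero _) (hA.differentiableAt hu y)]
  rfl

end Calculus

lemma of_contDiffOn {X : Type*} [NormedAddCommGroup X] [NormedSpace ℝ X] {S : Set X}
    {A : X → E → F} (hA : ContDiffOn ℝ 1 (uncurry A) (S ×ˢ univ)) : IsC1FamilyOn S A where
  contDiff u hu := contDiffOn_univ.1 <|
    hA.comp (contDiff_prodMk_right u).contDiffOn fun _ _ => ⟨hu, mem_univ _⟩
  continuousOn := hA.continuousOn
  continuousOn_fderiv p hp := by
    have hA' : ContDiffOn ℝ 1 (uncurry fun q : X × E => A q.1) ((S ×ˢ univ) ×ˢ univ) :=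
      hA.comp (f := fun q : (X × E) × E => (q.1.1, q.2)) (by fun_prop)
        fun q hq => ⟨hq.1.1, mem_univ _⟩
    simpa only [fderivWithin_univ] using
      ((hA' (p, p.2) ⟨hp, mem_univ _⟩).fderivWithin (m := 0) contDiffWithinAt_snd
        uniqueDiffOn_univ (by norm_num) hp fun _ _ => mem_univ _).continuousWithinAt

end IsC1FamilyOn

lemma continuousOn_intervalIntegral_of_triangle {s t : ℝ} (hst : s ≤ t) {K : ℝ → ℝ → F}
    (hK : ContinuousOn (uncurry K) {p | s ≤ p.2 ∧ p.2 ≤ p.1 ∧ p.1 ≤ t}) :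
    ContinuousOn (fun u => ∫ v in s..u, K u v) (Icc s t) := by
  -- Precomposing with a retraction onto the triangle extends `K` continuously to the whole plane.
  let clamp : ℝ × ℝ → ℝ × ℝ := fun p => (max s (min p.1 t), max s (min p.2 (max s (min p.1 t))))
  have hclamp : Continuous (uncurry fun u v => uncurry K (clamp (u, v))) := by
    refine hK.comp_continuous (by fun_prop) fun p => ⟨le_max_left _ _, ?_, max_le hst ?_⟩
    exacts [max_le (le_max_left _ _) (min_le_right _ _), min_le_right _ _]
  have hint : Continuous fun u => ∫ v in s..u, uncurry K (clamp (u, v)) :=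
    intervalIntegral.continuous_parametric_intervalIntegral_of_continuous hclamp continuous_id
  refine hint.continuousOn.congr fun u hu => intervalIntegral.integral_congr fun v hv => ?_
  rw [uIcc_of_le hu.1] at hv
  simp [clamp, hu.1, hu.2, hv.1, hv.2]

/-- `Z` is the forward two-parameter flow of the autonomous equation `z' = b z`: `Z u t x` is the
position at time `t` of the solution started from `x` at time `u`. Only times `0 ≤ u ≤ t` are
constrained. -/
structure IsForwardFlow (b : E → E) (Z : ℝ → ℝ → E → E) : Prop where
  self : ∀ u, 0 ≤ u → ∀ x, Z u u x = x
  hasDerivWithinAt : ∀ u, 0 ≤ u → ∀ x, ∀ t ∈ Ici u,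
    HasDerivWithinAt (fun τ => Z u τ x) (b (Z u t x)) (Ici u) t
  comp : ∀ s u t, 0 ≤ s → s ≤ u → u ≤ t → ∀ x, Z u t (Z s u x) = Z s t x

namespace IsForwardFlow

variable {b : E → E} {Z : ℝ → ℝ → E → E} {s u v t T : ℝ} {Y : ℝ → E}

lemma backward_equation (hZ : IsForwardFlow b Z) (hu : 0 ≤ u) (huT : u < T) {y : E}
    {L : ℝ × E →L[ℝ] E}
    (hL : HasFDerivWithinAt (fun p : ℝ × E => Z p.1 T p.2) L (Icc 0 T ×ˢ univ) (u, y)) :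
    L (1, b y) = 0 := by
  have hcurve : HasDerivWithinAt (fun τ => (τ, Z u τ y)) ((1 : ℝ), b y) (Icc u T) u := by
    have hflow := (hZ.hasDerivWithinAt u hu y u self_mem_Ici).mono
      (Icc_subset_Ici_self : Icc u T ⊆ Ici u)
    rw [hZ.self u hu] at hflow
    exact (hasDerivWithinAt_id u _).prodMk hflow
  have hmaps : MapsTo (fun τ => (τ, Z u τ y)) (Icc u T) (Icc 0 T ×ˢ univ) :=
    fun τ hτ => ⟨⟨hu.trans hτ.1, hτ.2⟩, mem_univ _⟩
  rw [← hZ.self u hu y] at hL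
  have hL' := hL.comp_hasDerivWithinAt u hcurve hmaps
  have hconst : HasDerivWithinAt (fun τ => Z τ T (Z u τ y)) 0 (Icc u T) u :=
    (hasDerivWithinAt_const u _ (Z u T y)).congr (fun τ hτ => hZ.comp u τ T hu hτ.1 hτ.2 y)
      (hZ.comp u u T hu le_rfl huT.le y)
  exact (uniqueDiffOn_Icc huT u ⟨le_rfl, huT.le⟩).eq_deriv _ hL' hconst

lemma hasDerivWithinAt_comp_perturbed (hZ : IsForwardFlow b Z)
    (hC1 : ContDiffOn ℝ 1 (fun p : ℝ × E => Z p.1 T p.2) (Icc 0 T ×ˢ univ))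
    (hu : 0 ≤ u) (huT : u < T) {w : E}
    (hY : HasDerivWithinAt Y (b (Y u) + w) (Icc u T) u) :
    HasDerivWithinAt (fun τ => Z τ T (Y τ)) (fderiv ℝ (Z u T) (Y u) w) (Icc u T) u := by
  have hslice : MapsTo (fun y : E => (u, y)) univ (Icc 0 T ×ˢ univ) :=
    fun _ _ => ⟨⟨hu, huT.le⟩, mem_univ _⟩
  obtain ⟨L, hL⟩ := hC1.differentiableOn one_ne_zero (u, Y u) (hslice (mem_univ _))
  have hspace : HasFDerivAt (Z u T) (L.comp (.inr ℝ ℝ E)) (Y u) :=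
    hasFDerivWithinAt_univ.1 <|
      hL.comp (Y u) (hasFDerivAt_prodMk_right u (Y u)).hasFDerivWithinAt hslice
  have hLw : L (1, b (Y u) + w) = fderiv ℝ (Z u T) (Y u) w := by
    rw [hspace.fderiv, ← add_zero (1 : ℝ), ← Prod.mk_add_mk, map_add,
      hZ.backward_equation hu huT hL, zero_add]
    rfl
  have hcurve : HasDerivWithinAt (fun τ => (τ, Y τ)) ((1 : ℝ), b (Y u) + w) (Icc u T) u :=
    (hasDerivWithinAt_id u _).prodMk hY
  have hmaps : MapsTo (fun τ => (τ, Y τ)) (Icc u T) (Icc 0 T ×ˢ univ) :=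
    fun τ hτ => ⟨⟨hu.trans hτ.1, hτ.2⟩, mem_univ _⟩
  have hZY := hL.comp_hasDerivWithinAt u hcurve hmaps
  rwa [hLw] at hZY

lemma eq_of_solution (hZ : IsForwardFlow b Z)
    (hC1 : ContDiffOn ℝ 1 (fun p : ℝ × E => Z p.1 T p.2) (Icc 0 T ×ˢ univ))
    (hs : 0 ≤ s) (hsT : s ≤ T)
    (hY : ∀ u ∈ Icc s T, HasDerivWithinAt Y (b (Y u)) (Icc s T) u) :
    Y T = Z s T (Y s) := by
  have hcont : ContinuousOn (fun u => Z u T (Y u)) (Icc s T) :=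
    hC1.continuousOn.comp (continuousOn_id.prodMk fun u hu => (hY u hu).continuousWithinAt)
      fun u hu => ⟨⟨hs.trans hu.1, hu.2⟩, mem_univ _⟩
  have hderiv : ∀ u ∈ Ico s T, HasDerivWithinAt (fun u => Z u T (Y u)) 0 (Ici u) u := by
    intro u hu
    have hYu := (hY u (Ico_subset_Icc_self hu)).mono (Icc_subset_Icc_left hu.1)
    rw [← add_zero (b (Y u))] at hYu
    have hzero := hZ.hasDerivWithinAt_comp_perturbed hC1 (hs.trans hu.1) hu.2 hYu
    rw [map_zero] at hzero
    exact hzero.mono_of_mem_nhdsWithin (Icc_mem_nhdsGE hu.2)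
  have hconst := constant_of_has_deriv_right_zero hcont hderiv T ⟨hsT, le_rfl⟩
  rwa [hZ.self T (hs.trans hsT)] at hconst

lemma eq_shift (hZ : IsForwardFlow b Z)
    (hC1 : ContDiffOn ℝ 1 (fun p : ℝ × E => Z p.1 t p.2) (Icc 0 t ×ˢ univ))
    (hv : 0 ≤ v) (hvu : v ≤ u) (hut : u ≤ t) :
    Z v u = Z (t - u + v) t := by
  funext y
  have hsol : ∀ τ ∈ Icc (t - u + v) t, HasDerivWithinAt (fun τ => Z v (τ - (t - u)) y)
      (b (Z v (τ - (t - u)) y)) (Icc (t - u + v) t) τ := by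
    intro τ hτ
    have hflow := hZ.hasDerivWithinAt v hv y (τ - (t - u)) (by grind)
    have hshift : HasDerivWithinAt (fun τ => τ - (t - u)) 1 (Icc (t - u + v) t) τ :=
      (hasDerivWithinAt_id τ _).sub_const _
    simpa only [one_smul, comp_def] using hflow.scomp τ hshift fun a ha => by grind
  have hend := hZ.eq_of_solution hC1 (by linarith) (by linarith) hsol
  simpa only [sub_sub_cancel, add_sub_cancel_left, hZ.self v hv] using hend

lemma contDiffOn_of_le (hZ : IsForwardFlow b Z)
    (hC1 : ContDiffOn ℝ 1 (fun p : ℝ × E => Z p.1 t p.2) (Icc 0 t ×ˢ univ)) (hut : u ≤ t) :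
    ContDiffOn ℝ 1 (fun p : ℝ × E => Z p.1 u p.2) (Icc 0 u ×ˢ univ) := by
  have hshift : ContDiffOn ℝ 1 (fun p : ℝ × E => Z (t - u + p.1) t p.2) (Icc 0 u ×ˢ univ) :=
    hC1.comp (f := fun p : ℝ × E => (t - u + p.1, p.2)) (by fun_prop)
      fun p hp => ⟨⟨by linarith [hp.1.1], by linarith [hp.1.2]⟩, mem_univ _⟩
  exact hshift.congr fun p hp => congrFun (hZ.eq_shift hC1 hp.1.1 hp.1.2 hut) p.2

theorem alekseev_groebner [CompleteSpace F] (hZ : IsForwardFlow b Z)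
    (hC1 : ContDiffOn ℝ 1 (fun p : ℝ × E => Z p.1 T p.2) (Icc 0 T ×ˢ univ))
    (hs : 0 ≤ s) (hsT : s ≤ T) {w : ℝ → E} (hw : ContinuousOn w (Icc s T))
    (hY : ∀ u ∈ Icc s T, HasDerivWithinAt Y (b (Y u) + w u) (Icc s T) u)
    {φ : E → F} (hφ : ContDiff ℝ 1 φ) :
    φ (Y T) = φ (Z s T (Y s)) + ∫ u in s..T, fderiv ℝ (φ ∘ Z u T) (Y u) (w u) := by
  have hZT : IsC1FamilyOn (Icc 0 T) fun u => Z u T := .of_contDiffOn hC1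
  have hφZ : IsC1FamilyOn (Icc 0 T) fun u => φ ∘ Z u T := (IsC1FamilyOn.const hφ).comp hZT
  have hcurve : ContinuousOn (fun u => (u, Y u)) (Icc s T) :=
    continuousOn_id.prodMk fun u hu => (hY u hu).continuousWithinAt
  have hmaps : MapsTo (fun u => (u, Y u)) (Icc s T) (Icc 0 T ×ˢ univ) :=
    fun u hu => ⟨⟨hs.trans hu.1, hu.2⟩, mem_univ _⟩
  have hderiv : ∀ u ∈ Ioo s T, HasDerivWithinAt (fun u => φ (Z u T (Y u)))
      (fderiv ℝ (φ ∘ Z u T) (Y u) (w u)) (Ioi u) u := by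
    intro u hu
    have huI := Ioo_subset_Icc_self hu
    have hZY := hZ.hasDerivWithinAt_comp_perturbed hC1 (hs.trans huI.1) hu.2
      ((hY u huI).mono (Icc_subset_Icc_left huI.1))
    have hφd := hφ.differentiable one_ne_zero (Z u T (Y u))
    rw [fderiv_comp _ hφd (hZT.differentiableAt (hmaps huI).1 _)]
    exact (hφd.hasFDerivAt.comp_hasDerivWithinAt u hZY).mono_of_mem_nhdsWithin
      (Icc_mem_nhdsGT hu.2)
  have hFTC := intervalIntegral.integral_eq_sub_of_hasDeriv_right_of_le hsT
    (hφZ.continuousOn.comp hcurve hmaps) hderiv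
    (((hφZ.continuousOn_fderiv.comp hcurve hmaps).clm_apply hw).intervalIntegrable_of_Icc hsT)
  simp only [hFTC, comp_apply, hZ.self T (hs.trans hsT), add_sub_cancel]

variable {ι : Type*} [Fintype ι] {σ : ι → E → E} {k : ι → ℝ → ℝ}

theorem first_order_interpolation [CompleteSpace F] (hZ : IsForwardFlow b Z)
    (hC1 : ContDiffOn ℝ 1 (fun p : ℝ × E => Z p.1 T p.2) (Icc 0 T ×ˢ univ))
    (hs : 0 ≤ s) (hsT : s ≤ T) (hσ : ∀ j, Continuous (σ j))
    (hk : ∀ j, ContinuousOn (k j) (Icc s T))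
    (hY : ∀ u ∈ Icc s T,
      HasDerivWithinAt Y (b (Y u) + ∑ j, k j u • σ j (Y u)) (Icc s T) u)
    {φ : E → F} (hφ : ContDiff ℝ 1 φ) :
    φ (Y T) = φ (Z s T (Y s)) +
      ∑ j, ∫ u in s..T, k j u • dirDeriv (σ j) (φ ∘ Z u T) (Y u) := by
  have hYc : ContinuousOn Y (Icc s T) := fun u hu => (hY u hu).continuousWithinAt
  have hw : ContinuousOn (fun u => ∑ j, k j u • σ j (Y u)) (Icc s T) :=
    continuousOn_finsetSum _ fun j _ => (hk j).smul ((hσ j).comp_continuousOn hYc)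
  have hφZ : IsC1FamilyOn (Icc 0 T) fun u => φ ∘ Z u T :=
    (IsC1FamilyOn.const hφ).comp (.of_contDiffOn hC1)
  have hterm : ∀ j,
      ContinuousOn (fun u => k j u • dirDeriv (σ j) (φ ∘ Z u T) (Y u)) (Icc s T) :=
    fun j => (hk j).smul <| (hφZ.continuousOn_dirDeriv (hσ j)).comp
      (continuousOn_id.prodMk hYc) fun u hu => ⟨⟨hs.trans hu.1, hu.2⟩, mem_univ _⟩
  rw [← intervalIntegral.integral_finsetSum
    fun j _ => (hterm j).intervalIntegrable_of_Icc hsT]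
  simpa only [dirDeriv, map_sum, map_smul] using hZ.alekseev_groebner hC1 hs hsT hw hY hφ

lemma continuousOn_dirDeriv_comp_triangle (hZ : IsForwardFlow b Z)
    (hC1 : ContDiffOn ℝ 1 (fun p : ℝ × E => Z p.1 t p.2) (Icc 0 t ×ˢ univ)) (hs : 0 ≤ s)
    {ψ : ℝ → E → F} (hψ : IsC1FamilyOn (Icc 0 t) ψ) {g : E → E} (hg : Continuous g)
    (hY : ContinuousOn Y (Icc s t)) :
    ContinuousOn (fun p : ℝ × ℝ => dirDeriv g (ψ p.1 ∘ Z p.2 p.1) (Y p.2))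
      {p | s ≤ p.2 ∧ p.2 ≤ p.1 ∧ p.1 ≤ t} := by
  have hZt : IsC1FamilyOn (Icc 0 t) fun u => Z u t := .of_contDiffOn hC1
  have hZp : IsC1FamilyOn {p : ℝ × ℝ | s ≤ p.2 ∧ p.2 ≤ p.1 ∧ p.1 ≤ t} fun p => Z p.2 p.1 :=
    (hZt.comp_param (a := fun p => t - p.1 + p.2) (by fun_prop) fun p hp => by grind).congr
      fun p hp => hZ.eq_shift hC1 (hs.trans hp.1) hp.2.1 hp.2.2
  have hψp : IsC1FamilyOn {p : ℝ × ℝ | s ≤ p.2 ∧ p.2 ≤ p.1 ∧ p.1 ≤ t} fun p => ψ p.1 :=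
    hψ.comp_param continuousOn_fst fun p hp => ⟨hs.trans (hp.1.trans hp.2.1), hp.2.2⟩
  exact ((hψp.comp hZp).continuousOn_dirDeriv hg).comp
    (continuousOn_id.prodMk (hY.comp continuousOn_snd fun p hp => ⟨hp.1, hp.2.1.trans hp.2.2⟩))
    fun p hp => ⟨hp, mem_univ _⟩

lemma integral_smul_eq_add_iterated_integral [CompleteSpace F] (hZ : IsForwardFlow b Z)
    (hC1 : ContDiffOn ℝ 1 (fun p : ℝ × E => Z p.1 t p.2) (Icc 0 t ×ˢ univ))
    (hs : 0 ≤ s) (hst : s ≤ t) (hσ : ∀ i, Continuous (σ i))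
    (hk : ∀ i, ContinuousOn (k i) (Icc s t))
    (hY : ∀ u ∈ Icc s t,
      HasDerivWithinAt Y (b (Y u) + ∑ i, k i u • σ i (Y u)) (Icc s t) u)
    {ψ : ℝ → E → F} (hψ : IsC1FamilyOn (Icc 0 t) ψ) {c : ℝ → ℝ} (hc : ContinuousOn c (Icc s t)) :
    ∫ u in s..t, c u • ψ u (Y u) =
      (∫ u in s..t, c u • ψ u (Z s u (Y s))) +
        ∑ i, ∫ u in s..t, c u • ∫ v in s..u, k i v • dirDeriv (σ i) (ψ u ∘ Z v u) (Y v) := by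
  have hYc : ContinuousOn Y (Icc s t) := fun u hu => (hY u hu).continuousWithinAt
  have hexpand : ∀ u ∈ Icc s t, ψ u (Y u) = ψ u (Z s u (Y s)) +
      ∑ i, ∫ v in s..u, k i v • dirDeriv (σ i) (ψ u ∘ Z v u) (Y v) := by
    intro u hu
    have hsub : Icc s u ⊆ Icc s t := Icc_subset_Icc_right hu.2
    exact hZ.first_order_interpolation (hZ.contDiffOn_of_le hC1 hu.2) hs hu.1 hσ
      (fun i => (hk i).mono hsub) (fun v hv => (hY v (hsub hv)).mono hsub)
      (hψ.contDiff u ⟨hs.trans hu.1, hu.2⟩)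
  have hZc : ContinuousOn (fun u => Z s u (Y s)) (Icc s t) := fun u hu =>
    (hZ.hasDerivWithinAt s hs _ u hu.1).continuousWithinAt.mono Icc_subset_Ici_self
  have hfirst : ContinuousOn (fun u => c u • ψ u (Z s u (Y s))) (Icc s t) :=
    hc.smul <| hψ.continuousOn.comp (continuousOn_id.prodMk hZc)
      fun u hu => ⟨⟨hs.trans hu.1, hu.2⟩, mem_univ _⟩
  have hsecond : ∀ i, ContinuousOn (fun u =>
      c u • ∫ v in s..u, k i v • dirDeriv (σ i) (ψ u ∘ Z v u) (Y v)) (Icc s t) := fun i =>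
    hc.smul <| continuousOn_intervalIntegral_of_triangle hst <|
      ((hk i).comp continuousOn_snd fun p hp => ⟨hp.1, hp.2.1.trans hp.2.2⟩).smul
        (hZ.continuousOn_dirDeriv_comp_triangle hC1 hs hψ (hσ i) hYc)
  rw [← intervalIntegral.integral_finsetSum
      fun i _ => (hsecond i).intervalIntegrable_of_Icc hst,
    ← intervalIntegral.integral_add (hfirst.intervalIntegrable_of_Icc hst)
      ((continuousOn_finsetSum _ fun i _ => hsecond i).intervalIntegrable_of_Icc hst)]
  refine intervalIntegral.integral_congr fun u hu => ?_
  rw [uIcc_of_le hst] at hu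
  simp only [hexpand u hu, smul_add, Finset.smul_sum]

end IsForwardFlow

theorem stmt_19_general [CompleteSpace F] {ι : Type*} [Fintype ι] {b : E → E} {σ : ι → E → E}
    {Z : ℝ → ℝ → E → E} {s t : ℝ} {k : ι → ℝ → ℝ} {Y : ℝ → E} {f : E → F}
    (hZ : IsForwardFlow b Z) (hσ : ∀ j, ContDiff ℝ 1 (σ j))
    (hC1 : ContDiffOn ℝ 1 (fun p : ℝ × E => Z p.1 t p.2) (Icc 0 t ×ˢ univ))
    (hC2 : ∀ u ∈ Icc 0 t, ContDiff ℝ 2 (Z u t))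
    (hC2cont : ContinuousOn (fun p : ℝ × E => fderiv ℝ (fderiv ℝ (Z p.1 t)) p.2)
      (Icc 0 t ×ˢ univ))
    (hs : 0 ≤ s) (hst : s ≤ t) (hk : ∀ j, ContinuousOn (k j) (Icc s t))
    (hY : ∀ u ∈ Icc s t,
      HasDerivWithinAt Y (b (Y u) + ∑ j, k j u • σ j (Y u)) (Icc s t) u)
    (hf : ContDiff ℝ 2 f) :
    f (Y t) = f (Z s t (Y s))
      + (∑ j, ∫ u in s..t, k j u • dirDeriv (σ j) (f ∘ Z u t) (Z s u (Y s)))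
      + ∑ i, ∑ j, ∫ u in s..t, k j u •
          ∫ v in s..u, k i v • dirDeriv (σ i) (dirDeriv (σ j) (f ∘ Z u t) ∘ Z v u) (Y v) := by
  have hσc : ∀ j, Continuous (σ j) := fun j => (hσ j).continuous
  have hZt : IsC1FamilyOn (Icc 0 t) fun u => Z u t := .of_contDiffOn hC1
  have hZt' : IsC1FamilyOn (Icc 0 t) fun u => fderiv ℝ (Z u t) :=
    ⟨fun u hu => (hC2 u hu).fderiv_right (by norm_num), hZt.continuousOn_fderiv, hC2cont⟩
  have hψ : ∀ j, IsC1FamilyOn (Icc 0 t) fun u => dirDeriv (σ j) (f ∘ Z u t) :=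
    fun j => hZt.dirDeriv_comp hZt' (hσ j) hf
  rw [hZ.first_order_interpolation hC1 hs hst hσc hk hY (hf.of_le one_le_two), add_assoc,
    Finset.sum_comm, ← Finset.sum_add_distrib]
  congr! 2 with j
  exact hZ.integral_smul_eq_add_iterated_integral hC1 hs hst hσc hk hY (hψ j) (hk j)

/-- Second-order interpolation formula comparing the flow `Y` of the perturbed ODE
`Y' = b(Y) + Σ_j σ_j(Y) h_j'` with the two-parameter flow `Z_{u,t}` of `z' = b(z)`:
for every `C²` function `f`,
`f(Y(t)) = f(Z_{s,t}(x)) + Σ_j ∫_s^t ∂_{σ_j}(f∘Z_{u,t})(Z_{s,u}(x)) h_j'(u) du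
  + Σ_{i,j} ∫_s^t (∫_s^u ∂_{σ_i}(∂_{σ_j}(f∘Z_{u,t})∘Z_{v,u})(Y(v)) h_i'(v) dv) h_j'(u) du`,
where `∂_g φ(y) := ⟨∇φ(y), g(y)⟩` is the directional derivative along the vector field `g`. -/
theorem stmt_19 {r rbar : ℕ}
    (b : EuclideanSpace ℝ (Fin r) → EuclideanSpace ℝ (Fin r))
    (σ : Fin rbar → EuclideanSpace ℝ (Fin r) → EuclideanSpace ℝ (Fin r))
    (hb : ContDiff ℝ 1 b) (hσ : ∀ j, ContDiff ℝ 1 (σ j))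
    (Z : ℝ → ℝ → EuclideanSpace ℝ (Fin r) → EuclideanSpace ℝ (Fin r))
    (hZid : ∀ u : ℝ, 0 ≤ u → ∀ x, Z u u x = x)
    (hZode : ∀ u : ℝ, 0 ≤ u → ∀ x, ∀ t ∈ Set.Ici u,
        HasDerivWithinAt (fun τ => Z u τ x) (b (Z u t x)) (Set.Ici u) t)
    (hZsemi : ∀ s u t : ℝ, 0 ≤ s → s ≤ u → u ≤ t → ∀ x, Z u t (Z s u x) = Z s t x)
    (hZC1 : ∀ t : ℝ, ContDiffOn ℝ 1 (fun p : ℝ × EuclideanSpace ℝ (Fin r) => Z p.1 t p.2)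
        (Set.Icc 0 t ×ˢ (Set.univ : Set (EuclideanSpace ℝ (Fin r)))))
    (hZC2 : ∀ t : ℝ, ∀ u ∈ Set.Icc (0:ℝ) t, ContDiff ℝ 2 (fun x => Z u t x))
    (hZC2cont : ∀ t : ℝ, ContinuousOn
        (fun p : ℝ × EuclideanSpace ℝ (Fin r) =>
          fderiv ℝ (fun x => fderiv ℝ (fun y => Z p.1 t y) x) p.2)
        (Set.Icc 0 t ×ˢ (Set.univ : Set (EuclideanSpace ℝ (Fin r)))))
    (s t : ℝ) (hs : 0 ≤ s) (hst : s ≤ t) (x : EuclideanSpace ℝ (Fin r))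
    (h : Fin rbar → ℝ → ℝ) (hh : ∀ j, ContDiff ℝ 1 (h j))
    (Y : ℝ → EuclideanSpace ℝ (Fin r)) (hYs : Y s = x)
    (hY : ∀ u ∈ Set.Icc s t,
        HasDerivWithinAt Y (b (Y u) + ∑ j, deriv (h j) u • σ j (Y u)) (Set.Icc s t) u)
    (f : EuclideanSpace ℝ (Fin r) → ℝ) (hf : ContDiff ℝ 2 f) :
    f (Y t) = f (Z s t x)
      + (∑ j, ∫ u in s..t,
          fderiv ℝ (fun y => f (Z u t y)) (Z s u x) (σ j (Z s u x)) * deriv (h j) u)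
      + ∑ i, ∑ j, ∫ u in s..t,
          (∫ v in s..u,
            fderiv ℝ (fun w => fderiv ℝ (fun z => f (Z u t z)) (Z v u w) (σ j (Z v u w)))
              (Y v) (σ i (Y v)) * deriv (h i) v) * deriv (h j) u := by
  subst hYs
  simpa only [dirDeriv, comp_def, smul_eq_mul, mul_comm] using
    stmt_19_general ⟨hZid, hZode, hZsemi⟩ hσ (hZC1 t) (hZC2 t) (hZC2cont t) hs hst
      (fun j => ((hh j).continuous_deriv le_rfl).continuousOn) hY hf
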